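/- The group of permutations of the 15 pieces of Lloyd's 15-puzzle achievable by sequences of legal moves that return the blank to its original cell is exactly the alternating group A_15; in particular the transposition swapping pieces 14 and 15 while fixing all other pieces is not achievable. -/

import Mathlib

/-- Cells `c, d` of the 4×4 board (encoded as `Fin 16`, cell `(i,j)` being
`4*i + j`) are adjacent if they differ by one step horizontally or vertically. -/
def cellAdj (c d : Fin 16) : Prop :=
  (c.val / 4 = d.val / 4 ∧ (c.val % 4 + 1 = d.val % 4 ∨ d.val % 4 + 1 = c.val % 4)) ∨
  (c.val % 4 = d.val % 4 ∧ (c.val / 4 + 1 = d.val / 4 ∨ d.val / 4 + 1 = c.val / 4))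

/-- A state of the 15-puzzle is a permutation of `Fin 16` (cells to contents);
the symbol `15` is the blank.  A legal move slides the piece in a cell adjacent
to the blank into the blank cell, i.e.\ precomposes with the transposition of
the two cells. -/
def PuzzleMove (s t : Equiv.Perm (Fin 16)) : Prop :=
  ∃ c d : Fin 16, cellAdj c d ∧ s d = 15 ∧ t = s * Equiv.swap c d

/-!
A closed walk of the blank on a bipartite board has even length, and each of its steps is a
transposition, so only even rearrangements are achievable. Conversely, when the blank goes once
around a 2×2 square it cycles the other three pieces of the square. Starting in the corner of the
board, the blank can enter any square at the corner nearest to it without touching the other three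
cells, so all these three-cycles are achievable. Their supports connect all the pieces. A group
containing a connected family of three-cycles is primitive, because a block with two points which
meets the support of a three-cycle must contain that support, and by Jordan's theorem a primitive
group containing a three-cycle contains the alternating group.
-/

open Equiv Equiv.Perm SimpleGraph
open scoped Pointwise

section ThreeCycles

variable {α : Type*} [Fintype α] [DecidableEq α]

theorem isThreeCycle_apply_eq_of_ne {g : Perm α} (hg : g.IsThreeCycle) {x w : α}
    (hx : g x ≠ x) (hw : g w ≠ w) (hwx : w ≠ x) (hwgx : w ≠ g x) : g w = x := by
  have hsupp : g.support = {x, g x, g (g x)} :=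
    hg.support_eq_iff_mem_support.2 (mem_support.2 hx)
  have hw_eq : w = g (g x) := by
    have := mem_support.2 hw
    simp_all
  have hcube : g ^ 3 = 1 := hg.orderOf ▸ pow_orderOf_eq_one g
  rw [hw_eq]
  exact DFunLike.congr_fun hcube x

/-- The graph joining `x` to `y` when some three-cycle in `H` maps one to the other, which amounts
to both lying in the support of a common three-cycle of `H`. -/
def threeCycleGraph (H : Subgroup (Perm α)) : SimpleGraph α where
  Adj x y := x ≠ y ∧ ∃ g ∈ H, g.IsThreeCycle ∧ g x = y
  symm := ⟨fun _ _ ⟨hne, g, hgH, hg, hgx⟩ =>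
    ⟨hne.symm, g⁻¹, H.inv_mem hgH, hg.inv, inv_eq_iff_eq.2 hgx.symm⟩⟩
  loopless := ⟨fun _ h => h.1 rfl⟩

variable {H : Subgroup (Perm α)}

theorem threeCycleGraph_adj_of_swap_mul_swap_mem {x y z : α} (hxy : x ≠ y) (hxz : x ≠ z)
    (hyz : y ≠ z) (h : swap x y * swap x z ∈ H) :
    (threeCycleGraph H).Adj x y ∧ (threeCycleGraph H).Adj x z := by
  have hcycle := isThreeCycle_swap_mul_swap_same hxy hxz hyz
  have hzx : (swap x y * swap x z) x = z := by simp [swap_apply_of_ne_of_ne hxz.symm hyz.symm]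
  have hyx : (swap x y * swap x z) y = x := by simp [swap_apply_of_ne_of_ne hxy.symm hyz]
  exact ⟨.symm ⟨hxy.symm, _, h, hcycle, hyx⟩, hxz, _, h, hcycle, hzx⟩

theorem isPretransitive_of_threeCycleGraph_preconnected (hH : (threeCycleGraph H).Preconnected) :
    MulAction.IsPretransitive H α := by
  refine ⟨fun x y => ?_⟩
  obtain ⟨p⟩ := hH x y
  induction p with
  | nil => exact ⟨1, one_smul _ _⟩
  | cons hadj _ ih =>
    obtain ⟨_, g, hgH, _, rfl⟩ := hadj
    obtain ⟨k, rfl⟩ := ih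
    exact ⟨k * ⟨g, hgH⟩, mul_smul _ _ _⟩

-- Of the three points moved by `g`, either `B` contains just `x` together with a fixed point of
-- `g`, or it contains two of them; in each case `g • B` meets `B`.
theorem mem_of_isBlock_of_threeCycleGraph_adj {B : Set α} (hB : MulAction.IsBlock H B) {x y w : α}
    (hx : x ∈ B) (hw : w ∈ B) (hwx : w ≠ x) (hadj : (threeCycleGraph H).Adj x y) : y ∈ B := by
  obtain ⟨hne, g, hgH, hg, rfl⟩ := hadj
  let k : H := ⟨g, hgH⟩
  have gx_mem_of_meets {a : α} (ha : a ∈ B) (hga : g a ∈ B) : g x ∈ B := by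
    have hkB : k • B = B := hB.smul_eq_of_mem ha hga
    exact hkB ▸ Set.smul_mem_smul_set (a := k) hx
  by_cases hgw : g w = w
  · exact gx_mem_of_meets hw (hgw.symm ▸ hw)
  by_cases hwgx : w = g x
  · exact hwgx ▸ hw
  · have hgw_eq : g w = x := isThreeCycle_apply_eq_of_ne hg hne.symm hgw hwx hwgx
    exact gx_mem_of_meets hw (hgw_eq.symm ▸ hx)

theorem isPreprimitive_of_threeCycleGraph_preconnected (hH : (threeCycleGraph H).Preconnected) :
    MulAction.IsPreprimitive H α := by
  have := isPretransitive_of_threeCycleGraph_preconnected hH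
  refine ⟨fun {B} hB => or_iff_not_imp_left.2 fun hBnt => ?_⟩
  rw [Set.not_subsingleton_iff] at hBnt
  obtain ⟨a, ha⟩ := hBnt.nonempty
  refine Set.eq_univ_of_forall fun y => ?_
  obtain ⟨p⟩ := hH a y
  induction p with
  | nil => exact ha
  | cons hadj _ ih =>
    obtain ⟨w, hw, hwx⟩ := hBnt.exists_ne _
    exact ih (mem_of_isBlock_of_threeCycleGraph_adj hB ha hw hwx hadj)

theorem alternatingGroup_le_of_threeCycleGraph_preconnected
    (hH : (threeCycleGraph H).Preconnected) : alternatingGroup α ≤ H := by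
  cases subsingleton_or_nontrivial α with
  | inl _ => exact fun g _ => Subsingleton.elim 1 g ▸ H.one_mem
  | inr _ =>
    obtain ⟨x⟩ := Nontrivial.to_nonempty (α := α)
    obtain ⟨y, _, g, hgH, hg, _⟩ := hH.exists_adj_of_nontrivial x
    exact alternatingGroup_le_of_isPreprimitive_of_isThreeCycle_mem
      (isPreprimitive_of_threeCycleGraph_preconnected hH) hg hgH

end ThreeCycles

section Sliding

variable {V : Type*} [DecidableEq V] {G : SimpleGraph V} {b u v w : V}

/-- A legal move of the sliding puzzle on the board `G`: states map cells to contents, and the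
content `b` (the blank) is exchanged with that of an adjacent cell. -/
def SlideMove (G : SimpleGraph V) (b : V) (s t : Perm V) : Prop :=
  ∃ c d : V, G.Adj c d ∧ s d = b ∧ t = s * swap c d

/-- The rearrangement produced by moving the blank along a walk, as a map from cells to contents. -/
def slidePerm : {u v : V} → G.Walk u v → Perm V
  | _, _, .nil => 1
  | u, _, .cons (v := v) _ p => swap u v * slidePerm p

theorem slidePerm_append (p : G.Walk u v) (q : G.Walk v w) :
    slidePerm (p.append q) = slidePerm p * slidePerm q := by
  induction p with
  | nil => exact (one_mul _).symm
  | cons h p ih => simp only [Walk.cons_append, slidePerm, ih, mul_assoc]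

theorem slidePerm_concat (p : G.Walk u v) (h : G.Adj v w) :
    slidePerm (p.concat h) = slidePerm p * swap v w := by
  simp [Walk.concat_eq_append, slidePerm_append, slidePerm]

theorem slidePerm_reverse (p : G.Walk u v) : slidePerm p.reverse = (slidePerm p)⁻¹ := by
  induction p with
  | nil => exact inv_one.symm
  | cons h p ih =>
    rw [Walk.reverse_cons, ← Walk.concat_eq_append, slidePerm_concat, ih, slidePerm, mul_inv_rev,
      swap_inv, swap_comm]

theorem slidePerm_apply_end (p : G.Walk u v) : slidePerm p v = u := by
  induction p with
  | nil => rfl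
  | cons h p ih => simp [slidePerm, ih]

theorem slidePerm_apply_of_notMem_support (p : G.Walk u v) {x : V} (hx : x ∉ p.support) :
    slidePerm p x = x := by
  induction p with
  | nil => rfl
  | cons h p ih =>
    rw [Walk.support_cons, List.mem_cons, not_or] at hx
    have hxv := (ne_of_mem_of_not_mem p.start_mem_support hx.2).symm
    rw [slidePerm, mul_apply, ih hx.2, swap_apply_of_ne_of_ne hx.1 hxv]

theorem sign_slidePerm [Fintype V] (p : G.Walk u v) : sign (slidePerm p) = (-1) ^ p.length := by
  induction p with
  | nil => simp [slidePerm]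
  | cons h p ih => rw [slidePerm, Perm.sign_mul, sign_swap h.ne, ih, Walk.length_cons, pow_succ']

theorem reflTransGen_slideMove_iff_exists_walk {π : Perm V} :
    Relation.ReflTransGen (SlideMove G b) 1 π ↔ ∃ v, ∃ p : G.Walk b v, slidePerm p = π := by
  constructor
  · intro h
    induction h with
    | refl => exact ⟨b, .nil, rfl⟩
    | tail _ hmove ih =>
      obtain ⟨v, p, rfl⟩ := ih
      obtain ⟨c, d, hadj, hd, rfl⟩ := hmove
      obtain rfl : d = v := (slidePerm p).injective (hd.trans (slidePerm_apply_end p).symm)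
      exact ⟨c, p.concat hadj.symm, by rw [slidePerm_concat, swap_comm]⟩
  · rintro ⟨v, p, rfl⟩
    induction p using Walk.concatRec with
    | Hnil => exact .refl
    | Hconcat p h ih =>
      exact ih.tail ⟨_, _, h.symm, slidePerm_apply_end p, by rw [slidePerm_concat, swap_comm]⟩

/-- The permutations of all cells achieved by the closed walks of the blank based at `b`. -/
def slideGroup (G : SimpleGraph V) (b : V) : Subgroup (Perm V) where
  carrier := {π | ∃ p : G.Walk b b, slidePerm p = π}
  mul_mem' := by
    rintro _ _ ⟨p, rfl⟩ ⟨q, rfl⟩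
    exact ⟨p.append q, slidePerm_append p q⟩
  one_mem' := ⟨.nil, rfl⟩
  inv_mem' := by
    rintro _ ⟨p, rfl⟩
    exact ⟨p.reverse, slidePerm_reverse p⟩

theorem apply_eq_self_of_mem_slideGroup {π : Perm V} (h : π ∈ slideGroup G b) : π b = b := by
  obtain ⟨p, rfl⟩ := h
  exact slidePerm_apply_end p

theorem mem_slideGroup_iff_reflTransGen {π : Perm V} :
    π ∈ slideGroup G b ↔ Relation.ReflTransGen (SlideMove G b) 1 π ∧ π b = b := by
  rw [reflTransGen_slideMove_iff_exists_walk]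
  constructor
  · exact fun h => ⟨⟨b, h⟩, apply_eq_self_of_mem_slideGroup h⟩
  · rintro ⟨⟨v, p, rfl⟩, hb⟩
    obtain rfl : v = b := (slidePerm p).injective ((slidePerm_apply_end p).trans hb.symm)
    exact ⟨p, rfl⟩

theorem sign_eq_one_of_mem_slideGroup [Fintype V] (hG : G.IsBipartite) {π : Perm V}
    (h : π ∈ slideGroup G b) : sign π = 1 := by
  obtain ⟨p, rfl⟩ := h
  have hlength : Even p.length := two_colorable_iff_forall_loop_even.1 hG _ p
  rw [sign_slidePerm, hlength.neg_one_pow]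

theorem swap_mul_swap_mem_slideGroup_of_square {q x y z : V} (hqx : G.Adj q x) (hxy : G.Adj x y)
    (hyz : G.Adj y z) (hzq : G.Adj z q) (hxz : x ≠ z) (p : G.Walk b q) (hx : x ∉ p.support)
    (hy : y ∉ p.support) (hz : z ∉ p.support) : swap y x * swap y z ∈ slideGroup G b := by
  let square : G.Walk q q := .cons hqx (.cons hxy (.cons hyz (.cons hzq .nil)))
  have hyq : y ≠ q := (ne_of_mem_of_not_mem p.end_mem_support hy).symm
  have hsquare : slidePerm square = swap y x * swap y z := by
    ext a
    simp only [square, slidePerm, mul_one, mul_apply, swap_apply_def]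
    grind [hqx.ne, hxy.ne, hyz.ne, hzq.ne]
  have hdisjoint : Perm.Disjoint (slidePerm p) (swap y x * swap y z) := by
    intro a
    by_cases ha : a ∈ p.support
    · have ne_of_notMem {c : V} (hc : c ∉ p.support) : a ≠ c := ne_of_mem_of_not_mem ha hc
      right
      simp [swap_apply_of_ne_of_ne, ne_of_notMem hx, ne_of_notMem hy, ne_of_notMem hz]
    · exact .inl (slidePerm_apply_of_notMem_support p ha)
  refine ⟨(p.append square).append p.reverse, ?_⟩
  rw [slidePerm_append, slidePerm_append, slidePerm_reverse, hsquare, hdisjoint.commute.eq,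
    mul_inv_cancel_right]

/-- The rearrangements of the pieces achievable with the blank returning to its original cell `b`;
the pieces are identified with their initial cells. -/
def pieceGroup (G : SimpleGraph V) (b : V) : Subgroup (Perm {v // v ≠ b}) :=
  (slideGroup G b).comap ofSubtype

variable [Fintype V]

theorem threeCycleGraph_pieceGroup_adj_of_square {q : V} {x y z : {v // v ≠ b}}
    (hqx : G.Adj q x) (hxy : G.Adj x y) (hyz : G.Adj y z) (hzq : G.Adj z q) (hxz : x ≠ z)
    (p : G.Walk b q) (hx : ↑x ∉ p.support) (hy : ↑y ∉ p.support) (hz : ↑z ∉ p.support) :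
    (threeCycleGraph (pieceGroup G b)).Adj y x ∧ (threeCycleGraph (pieceGroup G b)).Adj y z := by
  refine threeCycleGraph_adj_of_swap_mul_swap_mem (fun h => hxy.ne (congrArg _ h.symm))
    (fun h => hyz.ne (congrArg _ h)) hxz ?_
  rw [pieceGroup, Subgroup.mem_comap, map_mul, ofSubtype_swap_eq, ofSubtype_swap_eq]
  exact swap_mul_swap_mem_slideGroup_of_square hqx hxy hyz hzq (Subtype.coe_injective.ne hxz)
    p hx hy hz

theorem pieceGroup_eq_alternatingGroup (hG : G.IsBipartite)
    (hconn : (threeCycleGraph (pieceGroup G b)).Preconnected) :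
    pieceGroup G b = alternatingGroup {v // v ≠ b} := by
  refine le_antisymm (fun σ hσ => ?_) (alternatingGroup_le_of_threeCycleGraph_preconnected hconn)
  rw [mem_alternatingGroup, ← sign_ofSubtype]
  exact sign_eq_one_of_mem_slideGroup hG hσ

theorem mem_slideGroup_iff_of_pieceGroup_eq_alternatingGroup
    (h : pieceGroup G b = alternatingGroup {v // v ≠ b}) {π : Perm V} :
    π ∈ slideGroup G b ↔ π b = b ∧ sign π = 1 := by
  rw [← and_iff_right_of_imp (apply_eq_self_of_mem_slideGroup (G := G) (b := b) (π := π))]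
  refine and_congr_right fun hb => ?_
  have hne (x : V) : π x ≠ b ↔ x ≠ b := by rw [← π.injective.ne_iff (x := x), hb]
  have hmoved (x : V) (hx : π x ≠ x) : x ≠ b := fun hxb => hx (hxb ▸ hb)
  rw [← ofSubtype_subtypePerm hne hmoved, sign_ofSubtype, ← mem_alternatingGroup, ← h]
  rfl

end Sliding

section Grid

theorem exists_hasse_walk_top_forall_le {α : Type*} [PartialOrder α] [OrderTop α] [Finite α]
    (x : α) : ∃ p : (hasse α).Walk ⊤ x, ∀ y ∈ p.support, x ≤ y := by
  induction x using WellFoundedGT.induction with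
  | ind x ih =>
    obtain rfl | hx := eq_or_ne x ⊤
    · exact ⟨.nil, by simp⟩
    obtain ⟨y, hxy, _⟩ := exists_covBy_le_of_lt hx.lt_top
    obtain ⟨p, hp⟩ := ih y hxy.lt
    refine ⟨p.concat (hasse_adj.2 (.inr hxy)), fun z hz => ?_⟩
    rw [Walk.support_concat, List.mem_append, List.mem_singleton] at hz
    obtain hz | rfl := hz
    · exact hxy.le.trans (hp z hz)
    · exact le_rfl

theorem colorable_boxProd {α β : Type*} {G : SimpleGraph α} {H : SimpleGraph β} {n : ℕ}
    [NeZero n] (hG : G.Colorable n) (hH : H.Colorable n) : (G □ H).Colorable n := by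
  obtain ⟨c⟩ := hG
  obtain ⟨d⟩ := hH
  refine ⟨Coloring.mk (fun x => c x.1 + d x.2) ?_⟩
  rintro ⟨a, b⟩ ⟨a', b'⟩ (⟨hadj, rfl : b = b'⟩ | ⟨hadj, rfl : a = a'⟩)
  · exact (add_left_injective _).ne (c.valid hadj)
  · exact (add_right_injective _).ne (d.valid hadj)

theorem hasse_fin_prod_isBipartite (m n : ℕ) : (hasse (Fin m × Fin n)).IsBipartite := by
  rw [hasse_prod]
  exact colorable_boxProd (pathGraph.bicoloring m).colorable (pathGraph.bicoloring n).colorable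

variable {V α β : Type*} [Fintype V] [DecidableEq V] {G : SimpleGraph V}
  [LinearOrder α] [BoundedOrder α] [Finite α] [LinearOrder β] [BoundedOrder β] [Finite β]
  (e : hasse (α × β) ≃g G)

-- The blank reaches the corner `(a', b')` through cells above it, hence without disturbing the
-- other three cells of the square, which it then cycles.
theorem threeCycleGraph_pieceGroup_adj_of_covBy {a a' : α} {b b' : β} (ha : a ⋖ a') (hb : b ⋖ b')
    (ha'b : e (a', b) ≠ e ⊤) (hab : e (a, b) ≠ e ⊤) (hab' : e (a, b') ≠ e ⊤) :
    (threeCycleGraph (pieceGroup G (e ⊤))).Adj ⟨e (a, b), hab⟩ ⟨e (a', b), ha'b⟩ ∧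
      (threeCycleGraph (pieceGroup G (e ⊤))).Adj ⟨e (a, b), hab⟩ ⟨e (a, b'), hab'⟩ := by
  obtain ⟨p, hp⟩ := exists_hasse_walk_top_forall_le (a', b')
  have adj_left {x y : α} (z : β) (h : x ⋖ y) : G.Adj (e (x, z)) (e (y, z)) :=
    e.map_adj_iff.2 (hasse_adj.2 (.inl (Prod.mk_covBy_mk_iff_left.2 h)))
  have adj_right (x : α) {y z : β} (h : y ⋖ z) : G.Adj (e (x, y)) (e (x, z)) :=
    e.map_adj_iff.2 (hasse_adj.2 (.inl (Prod.mk_covBy_mk_iff_right.2 h)))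
  have notMem {x : α × β} (hx : ¬ (a', b') ≤ x) : e x ∉ (p.map e.toHom).support := by
    rw [Walk.support_map]
    exact fun h => hx (hp x ((List.mem_map_of_injective e.injective).1 h))
  refine threeCycleGraph_pieceGroup_adj_of_square (adj_right a' hb).symm (adj_left b ha).symm
    (adj_right a hb) (adj_left b' ha) ?_ (p.map e.toHom) (notMem ?_) (notMem ?_) (notMem ?_)
  · simp [ha.lt.ne']
  · simp [hb.lt]
  · simp [ha.lt]
  · simp [ha.lt]

theorem exists_lt_threeCycleGraph_pieceGroup_adj [Nontrivial α] [Nontrivial β] {x : α × β}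
    (hbot : x ≠ ⊥) (htop : e x ≠ e ⊤) :
    ∃ (y : α × β) (hy : e y ≠ e ⊤), y < x ∧
      (threeCycleGraph (pieceGroup G (e ⊤))).Adj ⟨e x, htop⟩ ⟨e y, hy⟩ := by
  obtain ⟨r, c⟩ := x
  have ne_top_of_lt {y : α × β} (hy : y < (r, c)) : e y ≠ e ⊤ := e.injective.ne hy.ne_top
  have hcases : (r ≠ ⊥ ∧ c ≠ ⊤) ∨ (r ≠ ⊤ ∧ c ≠ ⊥) := by
    have htop' := e.injective.ne_iff.1 htop
    have hα := bot_ne_top (α := α)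
    have hβ := bot_ne_top (α := β)
    simp only [ne_eq, Prod.ext_iff, Prod.fst_bot, Prod.snd_bot, Prod.fst_top, Prod.snd_top]
      at hbot htop'
    grind
  obtain ⟨hr, hc⟩ | ⟨hr, hc⟩ := hcases
  · obtain ⟨r', _, hr'⟩ := exists_le_covBy_of_lt hr.bot_lt
    obtain ⟨c', hc', _⟩ := exists_covBy_le_of_lt hc.lt_top
    have hlt : (r', c) < (r, c) := Prod.mk_lt_mk_iff_left.2 hr'.lt
    have hright : (r', c') ≠ ⊤ := fun h => hr'.lt.ne_top (congrArg Prod.fst h)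
    exact ⟨_, ne_top_of_lt hlt, hlt, (threeCycleGraph_pieceGroup_adj_of_covBy e hr' hc' htop
      (ne_top_of_lt hlt) (e.injective.ne hright)).1.symm⟩
  · obtain ⟨r', hr', _⟩ := exists_covBy_le_of_lt hr.lt_top
    obtain ⟨c', _, hc'⟩ := exists_le_covBy_of_lt hc.bot_lt
    have hlt : (r, c') < (r, c) := Prod.mk_lt_mk_iff_right.2 hc'.lt
    have hleft : (r', c') ≠ ⊤ := fun h => hc'.lt.ne_top (congrArg Prod.snd h)
    exact ⟨_, ne_top_of_lt hlt, hlt, (threeCycleGraph_pieceGroup_adj_of_covBy e hr' hc'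
      (e.injective.ne hleft) (ne_top_of_lt hlt) htop).2.symm⟩

theorem threeCycleGraph_pieceGroup_preconnected [Nontrivial α] [Nontrivial β] :
    (threeCycleGraph (pieceGroup G (e ⊤))).Preconnected := by
  have hbot : e ⊥ ≠ e ⊤ := e.injective.ne bot_ne_top
  have reachable_bot (x : α × β) (hx : e x ≠ e ⊤) :
      (threeCycleGraph (pieceGroup G (e ⊤))).Reachable ⟨e x, hx⟩ ⟨e ⊥, hbot⟩ := by
    induction x using WellFoundedLT.induction with
    | ind x ih =>
      obtain rfl | hne := eq_or_ne x ⊥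
      · exact .refl _
      · obtain ⟨y, hy, hlt, hadj⟩ := exists_lt_threeCycleGraph_pieceGroup_adj e hne hx
        exact hadj.reachable.trans (ih y hlt hy)
  rintro ⟨x, hx⟩ ⟨y, hy⟩
  obtain ⟨x, rfl⟩ := e.surjective x
  obtain ⟨y, rfl⟩ := e.surjective y
  exact (reachable_bot x hx).trans (reachable_bot y hy).symm

end Grid

/-- The grid is encoded as the Hasse diagram of the product order, in which `⊤` is the corner cell
with the largest coordinates. -/
theorem stmt_7_general {V : Type*} [Fintype V] [DecidableEq V] {G : SimpleGraph V} {m n : ℕ}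
    (e : hasse (Fin (m + 2) × Fin (n + 2)) ≃g G) :
    ({π : Perm V | Relation.ReflTransGen (SlideMove G (e ⊤)) 1 π ∧ π (e ⊤) = e ⊤} =
      {π : Perm V | π (e ⊤) = e ⊤ ∧ sign π = 1}) ∧
    ∀ x y : V, x ≠ y → x ≠ e ⊤ → y ≠ e ⊤ →
      ¬ Relation.ReflTransGen (SlideMove G (e ⊤)) 1 (swap x y) := by
  have hG : G.IsBipartite := (hasse_fin_prod_isBipartite _ _).of_hom e.symm.toHom
  have hpiece : pieceGroup G (e ⊤) = alternatingGroup {v // v ≠ e ⊤} :=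
    pieceGroup_eq_alternatingGroup hG (threeCycleGraph_pieceGroup_preconnected e)
  have hslide (π : Perm V) := mem_slideGroup_iff_reflTransGen.symm.trans
    (mem_slideGroup_iff_of_pieceGroup_eq_alternatingGroup hpiece (π := π))
  refine ⟨Set.ext hslide, fun x y hxy hx hy hreach => ?_⟩
  have hfix : swap x y (e ⊤) = e ⊤ := swap_apply_of_ne_of_ne hx.symm hy.symm
  have hsign : sign (swap x y) = 1 := ((hslide _).1 ⟨hreach, hfix⟩).2
  rw [sign_swap hxy] at hsign
  exact absurd hsign (by decide)

/-- The 4×4 board of the 15-puzzle as a graph, with adjacency `cellAdj`. -/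
def cellGraph : SimpleGraph (Fin 16) where
  Adj := cellAdj
  symm := ⟨fun c d h => by unfold cellAdj at *; omega⟩
  loopless := ⟨fun c h => by unfold cellAdj at *; omega⟩

/-- The row-major numbering of the cells, identifying the order-theoretic grid with the board. -/
def cellGraphIso : hasse (Fin 4 × Fin 4) ≃g cellGraph where
  toEquiv := finProdFinEquiv
  map_rel_iff' := by
    rintro ⟨i, j⟩ ⟨k, l⟩
    have val_eq (x : Fin 4 × Fin 4) : ((finProdFinEquiv x : Fin 16) : ℕ) = x.2 + 4 * x.1 := rfl
    simp only [cellGraph, cellAdj, val_eq, hasse_adj, Prod.mk_covBy_mk_iff, Fin.covBy_iff,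
      Nat.covBy_iff_add_one_eq]
    omega

/-- The permutations of the board achievable by legal moves of the 15-puzzle
that return the blank to its original cell (cell `15`) are exactly the even
permutations fixing the blank cell — i.e.\ the achievable rearrangements of
the 15 pieces form the alternating group `A_15`.  In particular the single
transposition of pieces 14 and 15 (the contents of cells `13` and `14`) is
not achievable. -/
theorem stmt_7 :
    ({π : Equiv.Perm (Fin 16) | Relation.ReflTransGen PuzzleMove 1 π ∧ π 15 = 15} =
      {π : Equiv.Perm (Fin 16) | π 15 = 15 ∧ Equiv.Perm.sign π = 1}) ∧
    ¬ Relation.ReflTransGen PuzzleMove 1 (Equiv.swap (13 : Fin 16) 14) := by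
  obtain ⟨achievable_eq, not_swap⟩ := stmt_7_general cellGraphIso
  exact ⟨achievable_eq, not_swap 13 14 (by decide) (by decide) (by decide)⟩
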